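/- Every deterministic coBüchi automaton that recognises the complement Σ^ω ∖ L_main has at least 66 states. -/

import Mathlib

/-- A (nondeterministic) Büchi/coBüchi automaton: an initial state, a set of
transitions, and a subset of *significant* transitions. -/
structure BuchiAutomaton (σ : Type) (Q : Type) where
  init : Q
  trans : Set (Q × σ × Q)
  sig : Set (Q × σ × Q)
  sig_sub : sig ⊆ trans

namespace BuchiAutomaton

variable {σ Q : Type}

/-- `ρ` is a run of `A` on the infinite word `w`, starting at the state `p`. -/
def IsRunFrom (A : BuchiAutomaton σ Q) (p : Q) (w : ℕ → σ) (ρ : ℕ → Q) : Prop :=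
  ρ 0 = p ∧ ∀ i, (ρ i, w i, ρ (i + 1)) ∈ A.trans

/-- Büchi acceptance: the run contains infinitely many significant transitions. -/
def BuchiAcc (A : BuchiAutomaton σ Q) (w : ℕ → σ) (ρ : ℕ → Q) : Prop :=
  ∀ N, ∃ i, N ≤ i ∧ (ρ i, w i, ρ (i + 1)) ∈ A.sig

/-- coBüchi acceptance: the run contains finitely many significant transitions. -/
def CoBuchiAcc (A : BuchiAutomaton σ Q) (w : ℕ → σ) (ρ : ℕ → Q) : Prop :=
  ∃ N, ∀ i, N ≤ i → (ρ i, w i, ρ (i + 1)) ∉ A.sig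

/-- The language of `A` (as a Büchi automaton), with initial state `p`. -/
def LangFrom (A : BuchiAutomaton σ Q) (p : Q) : Set (ℕ → σ) :=
  {w | ∃ ρ, A.IsRunFrom p w ρ ∧ A.BuchiAcc w ρ}

/-- The language of `A`, read as a Büchi automaton. -/
def Lang (A : BuchiAutomaton σ Q) : Set (ℕ → σ) :=
  A.LangFrom A.init

/-- The language of `A`, read as a coBüchi automaton. -/
def CoLang (A : BuchiAutomaton σ Q) : Set (ℕ → σ) :=
  {w | ∃ ρ, A.IsRunFrom A.init w ρ ∧ A.CoBuchiAcc w ρ}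

/-- `A` is deterministic: at most one outgoing transition per state and letter. -/
def Deterministic (A : BuchiAutomaton σ Q) : Prop :=
  ∀ p a q q', (p, a, q) ∈ A.trans → (p, a, q') ∈ A.trans → q = q'

/-- `FinRun A l p`: `l` is a finite run of `A` from the initial state, ending in
the state `p` (represented as the chronological list of its transitions). -/
inductive FinRun (A : BuchiAutomaton σ Q) : List (Q × σ × Q) → Q → Prop
  | nil : FinRun A [] A.init
  | snoc {l : List (Q × σ × Q)} {p : Q} {a : σ} {q : Q} :
      FinRun A l p → (p, a, q) ∈ A.trans → FinRun A (l ++ [(p, a, q)]) q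

/-- A resolver for `A`: a function from finite runs and letters to transitions,
such that on every finite run from the initial state ending in a state `p` and
every letter `a`, it outputs a transition on `a` with source `p`. -/
structure Resolver (A : BuchiAutomaton σ Q) where
  res : List (Q × σ × Q) → σ → Q × σ × Q
  res_valid : ∀ l p a, A.FinRun l p →
    (res l a).1 = p ∧ (res l a).2.1 = a ∧ res l a ∈ A.trans

/-- The history (finite run) built by a resolver after reading `n` letters of `w`. -/
def Resolver.hist {A : BuchiAutomaton σ Q} (r : Resolver A) (w : ℕ → σ) : ℕ → List (Q × σ × Q)
  | 0 => []
  | n + 1 => r.hist w n ++ [r.res (r.hist w n) (w n)]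

/-- The run induced by the resolver on `w` satisfies the Büchi condition. -/
def Resolver.InducedBuchiAcc {A : BuchiAutomaton σ Q} (r : Resolver A) (w : ℕ → σ) : Prop :=
  ∀ N, ∃ n, N ≤ n ∧ r.res (r.hist w n) (w n) ∈ A.sig

/-- The run induced by the resolver on `w` satisfies the coBüchi condition. -/
def Resolver.InducedCoBuchiAcc {A : BuchiAutomaton σ Q} (r : Resolver A) (w : ℕ → σ) : Prop :=
  ∃ N, ∀ n, N ≤ n → r.res (r.hist w n) (w n) ∉ A.sig

/-- `A` is history-deterministic (as a Büchi automaton). -/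
def HistoryDeterministic (A : BuchiAutomaton σ Q) : Prop :=
  ∃ r : Resolver A, ∀ w ∈ A.Lang, r.InducedBuchiAcc w

/-- `A` is history-deterministic (as a coBüchi automaton). -/
def CoHistoryDeterministic (A : BuchiAutomaton σ Q) : Prop :=
  ∃ r : Resolver A, ∀ w ∈ A.CoLang, r.InducedCoBuchiAcc w

end BuchiAutomaton

/-- The finite factor `w[m..n)` of the infinite word `w`, as a list. -/
def wordSegment {σ : Type} (w : ℕ → σ) (m n : ℕ) : List σ :=
  (List.range (n - m)).map fun i => w (m + i)

/-- `omegaPow X`: the infinite words that can be written as an infinite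
concatenation of finite words, each belonging to `X`. -/
def omegaPow {σ : Type} (X : Set (List σ)) : Set (ℕ → σ) :=
  {w | ∃ φ : ℕ → ℕ, φ 0 = 0 ∧ StrictMono φ ∧ ∀ k, wordSegment w (φ k) (φ (k + 1)) ∈ X}

/-- The alphabet `Σ = {a, b, c, 1, …, 6, r₁, …, r₆, y}` (with `num i` the digit
`i+1` and `res i` the reset letter `r_{i+1}`). -/
inductive Al : Type
  | a | b | c
  | num (i : Fin 6)
  | res (i : Fin 6)
  | y
deriving DecidableEq, Fintype

/-- The states of the classifier DFA. -/
inductive CSt : Type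
  | p | q | t | s | r
  | ell (i : Fin 6)
deriving DecidableEq, Fintype

/-- The (partial) transition function of the classifier. A digit `num i` belongs
to `E = {1,2,3}` iff `i.val < 3`, and to `F = {4,5,6}` otherwise. -/
def clStep : CSt → Al → Option CSt
  | .p, .b => some .p
  | .p, .num _ => some .p
  | .p, .y => some .p
  | .p, .a => some .q
  | .p, .c => some .t
  | .q, .a => some .q
  | .q, .num _ => some .p
  | .q, .y => some .p
  | .q, .b => some .r
  | .q, .c => some .s
  | .t, .c => some .t
  | .t, .b => some .p
  | .t, .a => some .q
  | .t, .num i => if i.val < 3 then some (.ell i) else some .p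
  | .t, .y => some .p
  | .s, .c => some .s
  | .s, .b => some .r
  | .s, .a => some .q
  | .s, .num i => if i.val < 3 then some (.ell i) else some .p
  | .s, .y => some .p
  | .r, .b => some .r
  | .r, .a => some .q
  | .r, .c => some .s
  | .r, .num i => if 3 ≤ i.val then some (.ell i) else some .p
  | .r, .y => some .p
  | _, _ => none

/-- The run of the classifier on a finite word, from a given state. -/
def clRun : CSt → List Al → Option CSt
  | c, [] => some c
  | c, l :: w =>
    match clStep c l with
    | some c' => clRun c' w
    | none => none

/-- The language `L_α` (for `α : Fin 6`, representing `L_{α+1}`): the finite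
words whose run in the classifier from `p` is defined and ends in `ℓ_α`. -/
def Lcl (α : Fin 6) : Set (List Al) :=
  {w | clRun .p w = some (.ell α)}

/-- `L_main = (Σ^* ⋃_{α≠β} (L_α ∪ {r_α}) L_β L_β Σ^* y)^ω`. -/
def LMain : Set (ℕ → Al) :=
  omegaPow {w | ∃ α β : Fin 6, α ≠ β ∧ ∃ u v₁ v₂ v₃ z : List Al,
    (v₁ ∈ Lcl α ∨ v₁ = [Al.res α]) ∧ v₂ ∈ Lcl β ∧ v₃ ∈ Lcl β ∧
    w = u ++ v₁ ++ v₂ ++ v₃ ++ z ++ [Al.y]}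

namespace LMainBound

/-! ### The pattern underlying `LMain` -/

/-- The words that may open a pattern with label `α`. -/
def IsOpening (α : Fin 6) (v : List Al) : Prop :=
  v ∈ Lcl α ∨ v = [Al.res α]

/-- `w` has an infix in `(L_α ∪ {r_α}) L_β L_β` for some `α ≠ β`. -/
def HasPattern (w : List Al) : Prop :=
  ∃ α β : Fin 6, α ≠ β ∧ ∃ u v₁ v₂ v₃ z : List Al,
    IsOpening α v₁ ∧ v₂ ∈ Lcl β ∧ v₃ ∈ Lcl β ∧ w = u ++ v₁ ++ v₂ ++ v₃ ++ z

/-- The finite blocks whose infinite concatenations form `LMain`. -/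
def blocks : Set (List Al) :=
  {w | ∃ α β : Fin 6, α ≠ β ∧ ∃ u v₁ v₂ v₃ z : List Al,
    (v₁ ∈ Lcl α ∨ v₁ = [Al.res α]) ∧ v₂ ∈ Lcl β ∧ v₃ ∈ Lcl β ∧
    w = u ++ v₁ ++ v₂ ++ v₃ ++ z ++ [Al.y]}

lemma mem_blocks_iff {w : List Al} : w ∈ blocks ↔ ∃ w', HasPattern w' ∧ w = w' ++ [Al.y] := by
  constructor
  · rintro ⟨α, β, h, u, v₁, v₂, v₃, z, h₁, h₂, h₃, rfl⟩
    exact ⟨_, ⟨α, β, h, u, v₁, v₂, v₃, z, h₁, h₂, h₃, rfl⟩, rfl⟩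
  · rintro ⟨w', ⟨α, β, h, u, v₁, v₂, v₃, z, h₁, h₂, h₃, rfl⟩, rfl⟩
    exact ⟨α, β, h, u, v₁, v₂, v₃, z, h₁, h₂, h₃, rfl⟩

lemma HasPattern.of_infix {v w : List Al} (hv : HasPattern v) (h : v <:+: w) : HasPattern w := by
  obtain ⟨x, x', rfl⟩ := h
  obtain ⟨α, β, h, u, v₁, v₂, v₃, z, h₁, h₂, h₃, rfl⟩ := hv
  exact ⟨α, β, h, x ++ u, v₁, v₂, v₃, z ++ x', h₁, h₂, h₃, by simp⟩

/-! ### The classifier without its leaves -/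

/-- The states of the classifier that are not leaves. -/
inductive Inner : Type
  | p | q | t | s | r
deriving DecidableEq

instance : Fintype Inner := ⟨{.p, .q, .t, .s, .r}, fun i => by cases i <;> decide⟩

/-- The inclusion of the inner states into the classifier. -/
def Inner.toCSt : Inner → CSt
  | .p => .p | .q => .q | .t => .t | .s => .s | .r => .r

/-- The partial inverse of `Inner.toCSt`. -/
def innerOf : CSt → Option Inner
  | .p => some .p | .q => some .q | .t => some .t | .s => some .s | .r => some .r
  | .ell _ => none

/-- The classifier, blocked at its leaves. -/
def innerStep (i : Inner) (l : Al) : Option Inner :=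
  (clStep i.toCSt l).bind innerOf

lemma clRun_eq_foldlM (c : CSt) (u : List Al) : clRun c u = u.foldlM clStep c := by
  induction u generalizing c with
  | nil => rfl
  | cons l u ih =>
    simp only [clRun, List.foldlM_cons]
    cases clStep c l with
    | none => rfl
    | some c' => simpa using ih c'

lemma clRun_append (c : CSt) (u v : List Al) :
    clRun c (u ++ v) = (clRun c u).bind fun c' => clRun c' v := by
  simp only [clRun_eq_foldlM, List.foldlM_append]
  rfl

lemma innerOf_eq_some {c : CSt} {i : Inner} (h : innerOf c = some i) : c = i.toCSt := by
  cases c <;> simp only [innerOf, Option.some.injEq, reduceCtorEq] at h <;> subst h <;> rfl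

lemma innerOf_eq_none {c : CSt} (h : innerOf c = none) : ∃ γ, c = .ell γ := by
  cases c <;> simp_all [innerOf]

lemma clStep_eq_of_innerStep {i j : Inner} {l : Al} (h : innerStep i l = some j) :
    clStep i.toCSt l = some j.toCSt := by
  obtain ⟨c, hc, hj⟩ := Option.bind_eq_some_iff.1 h
  rw [hc, innerOf_eq_some hj]

lemma clRun_eq_of_innerRun {i j : Inner} {u : List Al} (h : u.foldlM innerStep i = some j) :
    clRun i.toCSt u = some j.toCSt := by
  induction u generalizing i with
  | nil => cases h; rfl
  | cons l u ih =>
    rw [List.foldlM_cons] at h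
    obtain ⟨k, hk, hu⟩ := Option.bind_eq_some_iff.1 h
    simp only [clRun, clStep_eq_of_innerStep hk]
    exact ih hu

lemma eq_nil_of_clRun_ell {γ : Fin 6} {c : CSt} {u : List Al} (h : clRun (.ell γ) u = some c) :
    u = [] ∧ c = .ell γ := by
  cases u with
  | nil => simpa [clRun, eq_comm] using h
  | cons l u => simp [clRun, clStep] at h

/-! ### The core: tracking the last label -/

/-- The states of the core: the last label, whether the label before it was a different one (so
that repeating the last label completes a pattern), and the state of the classifier. -/
abbrev Core : Type := Fin 6 × Bool × Inner

/-- The effect of a new label `γ`; undefined if it completes a pattern. -/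
def labelStep (α : Fin 6) (fresh : Bool) (γ : Fin 6) : Option Core :=
  if γ = α then (if fresh then none else some (α, false, .p)) else some (γ, true, .p)

/-- The partial transition function of the core, blocked when a pattern is completed. -/
def coreStep : Core → Al → Option Core
  | _, .res γ => some (γ, false, .p)
  | (α, fresh, i), l =>
    match clStep i.toCSt l with
    | some (.ell γ) => labelStep α fresh γ
    | some c => (innerOf c).map fun j => (α, fresh, j)
    | none => none

lemma coreStep_eq_of_innerStep {i j : Inner} {l : Al} (α : Fin 6) (fresh : Bool)
    (h : innerStep i l = some j) : coreStep (α, fresh, i) l = some (α, fresh, j) := by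
  have hc := clStep_eq_of_innerStep h
  cases l <;> cases i <;> cases j <;> simp_all [coreStep, innerOf, Inner.toCSt] <;>
    simp [clStep] at hc

lemma coreRun_eq_of_innerRun {i j : Inner} {u : List Al} (α : Fin 6) (fresh : Bool)
    (h : u.foldlM innerStep i = some j) :
    u.foldlM coreStep (α, fresh, i) = some (α, fresh, j) := by
  induction u generalizing i with
  | nil => cases h; rfl
  | cons l u ih =>
    rw [List.foldlM_cons] at h ⊢
    obtain ⟨k, hk, hu⟩ := Option.bind_eq_some_iff.1 h
    rw [coreStep_eq_of_innerStep α fresh hk]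
    exact ih hu

lemma coreStep_leaf {i : Inner} {l : Al} {γ : Fin 6} (α : Fin 6) (fresh : Bool)
    (h : clStep i.toCSt l = some (.ell γ)) : coreStep (α, fresh, i) l = labelStep α fresh γ := by
  cases l <;> simp_all [coreStep]
  cases i <;> simp [clStep, Inner.toCSt] at h

lemma coreRun_of_mem_Lcl {i : Inner} {v : List Al} {γ : Fin 6} (α : Fin 6) (fresh : Bool)
    (h : clRun i.toCSt v = some (.ell γ)) :
    v.foldlM coreStep (α, fresh, i) = labelStep α fresh γ := by
  induction v generalizing i with
  | nil => cases i <;> simp [clRun, Inner.toCSt] at h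
  | cons l v ih =>
    rw [List.foldlM_cons]
    cases hc : clStep i.toCSt l with
    | none => simp [clRun, hc] at h
    | some c =>
      simp only [clRun, hc] at h
      cases hj : innerOf c with
      | none =>
        obtain ⟨δ, rfl⟩ := innerOf_eq_none hj
        obtain ⟨rfl, hγ⟩ := eq_nil_of_clRun_ell h
        cases hγ
        rw [coreStep_leaf α fresh hc]
        cases labelStep α fresh γ <;> rfl
      | some j =>
        rw [coreStep_eq_of_innerStep α fresh (j := j) (by simp [innerStep, hc, hj])]
        rw [innerOf_eq_some hj] at h
        exact ih h

/-- `sim c i`: a run of the classifier started late, now in `c`, is compatible with an earlier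
started one that is now in `i`. -/
def sim (c i : Inner) : Bool :=
  c = i || c = .p || (c = .t && i = .s)

lemma coreStep_sim_inner : ∀ (c i : Inner) (l : Al), sim c i → ∀ c', innerStep c l = some c' →
    ∀ α fresh, (coreStep (α, fresh, i) l).all (fun d => sim c' d.2.2) := by
  decide +kernel

lemma coreStep_sim_leaf : ∀ (c i : Inner) (l : Al), sim c i → ∀ γ,
    clStep c.toCSt l = some (.ell γ) → clStep i.toCSt l = some (.ell γ) := by
  decide +kernel

lemma coreRun_of_mem_Lcl_of_sim {c i : Inner} {v : List Al} {γ : Fin 6} (α : Fin 6) (fresh : Bool)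
    (hs : sim c i) (h : clRun c.toCSt v = some (.ell γ)) {d : Core}
    (hd : v.foldlM coreStep (α, fresh, i) = some d) : ∃ fresh', d = (γ, fresh', .p) := by
  induction v generalizing c i α fresh with
  | nil => cases c <;> simp [clRun, Inner.toCSt] at h
  | cons l v ih =>
    rw [List.foldlM_cons] at hd
    obtain ⟨e, he, hv⟩ := Option.bind_eq_some_iff.1 hd
    cases hc : clStep c.toCSt l with
    | none => simp [clRun, hc] at h
    | some c' =>
      simp only [clRun, hc] at h
      cases hj : innerOf c' with
      | none =>
        obtain ⟨δ, rfl⟩ := innerOf_eq_none hj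
        obtain ⟨rfl, hγ⟩ := eq_nil_of_clRun_ell h
        cases hγ
        rw [coreStep_leaf α fresh (coreStep_sim_leaf c i l hs γ hc)] at he
        cases hv
        unfold labelStep at he
        split_ifs at he with h₁
        · exact ⟨_, by rw [h₁, Option.some.inj he]⟩
        · exact ⟨_, (Option.some.inj he).symm⟩
      | some j =>
        have := coreStep_sim_inner c i l hs j (by simp [innerStep, hc, hj]) α fresh
        rw [he] at this
        rw [innerOf_eq_some hj] at h
        exact ih e.1 e.2.1 this h hv

/-- The core does not survive a pattern. -/
lemma coreRun_eq_none_of_hasPattern {w : List Al} (hw : HasPattern w) (d : Core) :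
    w.foldlM coreStep d = none := by
  obtain ⟨α, β, hne, u, v₁, v₂, v₃, z, h₁, h₂, h₃, rfl⟩ := hw
  by_contra hsome
  obtain ⟨e, he⟩ := Option.ne_none_iff_exists'.1 hsome
  simp only [List.foldlM_append] at he
  obtain ⟨d₄, h₄, -⟩ := Option.bind_eq_some_iff.1 he
  obtain ⟨d₃, h₃', h₄⟩ := Option.bind_eq_some_iff.1 h₄
  obtain ⟨d₂, h₂', h₃'⟩ := Option.bind_eq_some_iff.1 h₃'
  obtain ⟨⟨α₁, f₁, i₁⟩, -, h₂'⟩ := Option.bind_eq_some_iff.1 h₂'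
  have hd₂ : ∃ f, d₂ = (α, f, .p) := by
    rcases h₁ with h₁ | rfl
    · exact coreRun_of_mem_Lcl_of_sim (c := .p) α₁ f₁ (by simp [sim]) h₁ h₂'
    · exact ⟨false, by simpa [coreStep, eq_comm] using h₂'⟩
  obtain ⟨f, rfl⟩ := hd₂
  rw [coreRun_of_mem_Lcl (i := .p) α f h₂, labelStep, if_neg hne.symm] at h₃'
  cases h₃'
  rw [coreRun_of_mem_Lcl (i := .p) β true h₃] at h₄
  simp [labelStep] at h₄

/-- `Tracks h d`: the core state `d` is correct after the history `h`. -/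
def Tracks (h : List Al) : Core → Prop
  | (α, fresh, i) => ∃ h₀ m k, h = h₀ ++ m ++ k ∧ clRun .p k = some i.toCSt ∧ IsOpening α m ∧
      (fresh = true → ∃ γ ≠ α, ∃ h₁ m₁, h₀ = h₁ ++ m₁ ∧ IsOpening γ m₁ ∧ m ∈ Lcl α)

lemma Tracks.label {h : List Al} {l : Al} {α γ : Fin 6} {fresh : Bool} {i : Inner}
    (hh : Tracks h (α, fresh, i)) (hl : clStep i.toCSt l = some (.ell γ)) :
    (labelStep α fresh γ = none → HasPattern (h ++ [l])) ∧
      ∀ d, labelStep α fresh γ = some d → Tracks (h ++ [l]) d := by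
  obtain ⟨h₀, m, k, rfl, hk, hm, hf⟩ := hh
  have hkl : k ++ [l] ∈ Lcl γ := by
    change clRun _ _ = _
    rw [clRun_append, hk]
    simp [clRun, hl]
  unfold labelStep
  split_ifs with h₁ h₂
  · subst h₁
    obtain ⟨δ, hδ, h₁, m₁, rfl, hm₁, hm'⟩ := hf h₂
    exact ⟨fun _ => ⟨δ, γ, hδ, h₁, m₁, m, k ++ [l], [], hm₁, hm', hkl, by simp⟩, by simp⟩
  · subst h₁
    refine ⟨by simp, ?_⟩
    rintro _ ⟨⟩
    exact ⟨h₀ ++ m, k ++ [l], [], by simp, rfl, .inl hkl, by simp⟩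
  · refine ⟨by simp, ?_⟩
    rintro _ ⟨⟩
    exact ⟨h₀ ++ m, k ++ [l], [], by simp, rfl, .inl hkl,
      fun _ => ⟨α, Ne.symm h₁, h₀, m, rfl, hm, hkl⟩⟩

lemma Tracks.step {h : List Al} {l : Al} {d : Core} (hh : Tracks h d) :
    (coreStep d l = none → HasPattern (h ++ [l])) ∧
      ∀ d', coreStep d l = some d' → Tracks (h ++ [l]) d' := by
  obtain ⟨α, fresh, i⟩ := d
  by_cases hr : ∃ γ, l = .res γ
  · obtain ⟨γ, rfl⟩ := hr
    refine ⟨by simp [coreStep], ?_⟩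
    rintro _ ⟨⟩
    exact ⟨h, [.res γ], [], by simp, rfl, .inr rfl, by simp⟩
  · cases hc : clStep i.toCSt l with
    | none =>
      exfalso
      cases i <;> cases l <;> simp [clStep, Inner.toCSt] at hc hr <;> split_ifs at hc
    | some c =>
      cases hj : innerOf c with
      | none =>
        obtain ⟨γ, rfl⟩ := innerOf_eq_none hj
        rw [coreStep_leaf α fresh hc]
        exact hh.label hc
      | some j =>
        rw [coreStep_eq_of_innerStep α fresh (j := j) (by simp [innerStep, hc, hj])]
        refine ⟨by simp, ?_⟩
        rintro _ ⟨⟩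
        obtain ⟨h₀, m, k, rfl, hk, hm, hf⟩ := hh
        refine ⟨h₀, m, k ++ [l], by simp, ?_, hm, hf⟩
        rw [clRun_append, hk]
        simp [clRun, hc, innerOf_eq_some hj]

lemma Tracks.hasPattern {h v : List Al} {d : Core} (hh : Tracks h d)
    (hv : v.foldlM coreStep d = none) : HasPattern (h ++ v) := by
  induction v generalizing h d with
  | nil => simp at hv
  | cons l v ih =>
    rw [List.foldlM_cons] at hv
    cases hd : coreStep d l with
    | none => exact (hh.step.1 hd).of_infix ⟨[], v, by simp⟩
    | some d' =>
      rw [hd] at hv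
      simpa using ih (hh.step.2 _ hd) hv

/-- Whatever blocks the core right after a reset letter is a pattern. -/
lemma hasPattern_of_coreRun_eq_none {α : Fin 6} {v : List Al}
    (hv : v.foldlM coreStep (α, false, .p) = none) : HasPattern (.res α :: v) :=
  Tracks.hasPattern (h := [.res α]) ⟨[], [.res α], [], rfl, rfl, .inr rfl, by simp⟩ hv

/-! ### Explicit words -/

/-- A word in `L_α`. -/
def labelWord (α : Fin 6) : List Al :=
  if α.val < 3 then [.c, .num α] else [.a, .b, .num α]

/-- A word leading the classifier from `p` to the given inner state. -/
def innerWord : Inner → List Al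
  | .p => [] | .q => [.a] | .t => [.c] | .s => [.a, .c] | .r => [.a, .b]

/-- A word leading the core from anywhere to the given state. -/
def coreWord : Core → List Al
  | (α, fresh, i) =>
    (if fresh then .res (α + 1) :: labelWord α else [.res α]) ++ innerWord i

/-- A word completing a pattern. -/
def killWord : List Al := .res 1 :: (labelWord 0 ++ labelWord 0)

lemma labelWord_mem : ∀ α, clRun .p (labelWord α) = some (.ell α) := by decide +kernel

lemma y_notMem_labelWord : ∀ α, Al.y ∉ labelWord α := by decide +kernel

lemma y_notMem_coreWord : ∀ d, Al.y ∉ coreWord d := by decide +kernel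

lemma y_notMem_killWord : Al.y ∉ killWord := by decide +kernel

lemma coreRun_coreWord (d d' : Core) : (coreWord d').foldlM coreStep d = some d' := by
  have key : ∀ d', (coreWord d').foldlM coreStep (0, false, .p) = some d' := by decide +kernel
  rw [← key d']
  obtain ⟨α, _ | _, i⟩ := d' <;> rfl

lemma coreRun_killWord (d : Core) : killWord.foldlM coreStep d = none := by
  have key : killWord.foldlM coreStep (0, false, .p) = none := by decide +kernel
  rw [← key]
  rfl

lemma hasPattern_killWord : HasPattern killWord :=
  ⟨1, 0, by decide, [], [.res 1], labelWord 0, labelWord 0, [], .inr rfl, labelWord_mem 0,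
    labelWord_mem 0, rfl⟩

lemma innerRun_y_innerWord (i j : Inner) : (Al.y :: innerWord j).foldlM innerStep i = some j := by
  revert i j
  decide +kernel

lemma innerRun_sync : ∀ i, [Al.b, .num 0].foldlM innerStep i = some .p := by decide +kernel

lemma coreRun_labelWord_twice : ∀ α fresh β, (α, fresh) ≠ (β, false) →
    (labelWord β ++ labelWord β).foldlM coreStep (α, fresh, .p) = none := by
  decide +kernel

lemma coreRun_labelWord_twice_self : ∀ β,
    (labelWord β ++ labelWord β).foldlM coreStep (β, false, .p) = some (β, false, .p) := by
  decide +kernel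

/-- Words whose survival separates the states of the core. -/
def testWords : List (List Al) :=
  (List.finRange 6).map (fun α => .y :: labelWord α) ++
  (List.finRange 6).map (fun α => .y :: (labelWord α ++ labelWord α)) ++
  [0, 1, 3, 4].flatMap fun g => [.num g :: labelWord g, .b :: .num g :: labelWord g]

lemma exists_testWord : ∀ d d' : Core, d ≠ d' → ∃ u ∈ testWords,
    (u.foldlM coreStep d).isSome ≠ (u.foldlM coreStep d').isSome := by
  decide +kernel

/-- Two inner states are separated, uniformly for two different labels, by a word without label
from one and with exactly one label from the other. -/
lemma exists_innerTest : ∀ i j : Inner, i ≠ j →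
    ∃ x ∈ [[], [Al.b]], ∃ g ∈ [((0 : Fin 6), (1 : Fin 6)), (3, 4)],
      (∀ γ ∈ [g.1, g.2], (x ++ [Al.num γ]).foldlM innerStep i = some .p ∧
        clRun j.toCSt (x ++ [Al.num γ]) = some (.ell γ)) ∨
      (∀ γ ∈ [g.1, g.2], (x ++ [Al.num γ]).foldlM innerStep j = some .p ∧
        clRun i.toCSt (x ++ [Al.num γ]) = some (.ell γ)) := by
  decide +kernel

/-! ### Reachability in products -/

lemma exists_bottom {V : Type*} [Finite V] {R : V → V → Prop} (hr : ∀ v, R v v)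
    (ht : ∀ u v w, R u v → R v w → R u w) (v : V) : ∃ b, R v b ∧ ∀ c, R b c → R c b := by
  obtain ⟨b, hb, hmin⟩ := (Set.toFinite {b | R v b}).exists_minimalFor
    (fun b => {c | R b c}) _ ⟨v, hr v⟩
  refine ⟨b, hb, fun c hc => ?_⟩
  exact hmin (j := c) (ht _ _ _ hb hc) (fun e he => ht _ _ _ hc he) (hr b)

section Reach

variable {Q D : Type*} (step : Q → Al → Q) (f : D → Al → Option D) (T : Al → Prop)

/-- Reachability in the product of `step` and the partial automaton `f`, by words over `T`. -/
def Reach (x x' : Q × D) : Prop :=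
  ∃ u : List Al, (∀ l ∈ u, T l) ∧ u.foldl step x.1 = x'.1 ∧ u.foldlM f x.2 = some x'.2

variable {step f T}

lemma Reach.refl (x : Q × D) : Reach step f T x x :=
  ⟨[], by simp, rfl, rfl⟩

lemma Reach.trans {x x' x'' : Q × D} (h : Reach step f T x x') (h' : Reach step f T x' x'') :
    Reach step f T x x'' := by
  obtain ⟨u, hu, h₁, h₂⟩ := h
  obtain ⟨v, hv, h₃, h₄⟩ := h'
  refine ⟨u ++ v, ?_, ?_, ?_⟩
  · intro l hl
    rcases List.mem_append.1 hl with hl | hl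
    exacts [hu l hl, hv l hl]
  · rw [List.foldl_append, h₁, h₃]
  · rw [List.foldlM_append, h₂]
    exact h₄

lemma Reach.mono {T' : Al → Prop} (hT : ∀ l, T l → T' l) {x x' : Q × D}
    (h : Reach step f T x x') : Reach step f T' x x' := by
  obtain ⟨u, hu, h⟩ := h
  exact ⟨u, fun l hl => hT l (hu l hl), h⟩

lemma Reach.exists_bottom [Finite Q] [Finite D] (x : Q × D) :
    ∃ b, Reach step f T x b ∧ ∀ c, Reach step f T b c → Reach step f T c b :=
  LMainBound.exists_bottom (R := Reach step f T) Reach.refl (fun _ _ _ => Reach.trans) x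

end Reach

/-- Every periodic choice of words comes back to one of its starting points. -/
lemma exists_return {Q : Type*} [Finite Q] (step : Q → Al → Q) (S : Set Q) (hS : S.Nonempty)
    (P : List Al → Prop) (hP₀ : P []) (hP : ∀ u v, P u → P v → P (u ++ v)) (f : Q → List Al)
    (hf : ∀ s ∈ S, P (f s)) (hfS : ∀ s ∈ S, (f s).foldl step s ∈ S) :
    ∃ s ∈ S, ∃ v, P v ∧ (f s ++ v).foldl step s = s := by
  have refl : ∀ s : S, ∃ u, P u ∧ u.foldl step s = s := fun s => ⟨[], hP₀, rfl⟩
  have trans : ∀ s t r : S, (∃ u, P u ∧ u.foldl step s = t) → (∃ u, P u ∧ u.foldl step t = r) →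
      ∃ u, P u ∧ u.foldl step s = r := by
    rintro s t r ⟨u, hu, h₁⟩ ⟨v, hv, h₂⟩
    exact ⟨u ++ v, hP _ _ hu hv, by rw [List.foldl_append, h₁, h₂]⟩
  obtain ⟨s₀, hs₀⟩ := hS
  obtain ⟨b, -, hb⟩ := exists_bottom refl trans ⟨s₀, hs₀⟩
  obtain ⟨v, hv, h⟩ := hb ⟨_, hfS b b.2⟩ ⟨f b, hf b b.2, rfl⟩
  exact ⟨b, b.2, v, hv, by rw [List.foldl_append]; exact h⟩

/-! ### Automata seen through their loops -/

/-- The path from `s` labelled by the given word avoids significant transitions. -/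
def Safe {Q : Type*} (step : Q → Al → Q) (sig : Q → Al → Prop) : Q → List Al → Prop
  | _, [] => True
  | s, l :: u => ¬ sig s l ∧ Safe step sig (step s l) u

lemma safe_append {Q : Type*} {step : Q → Al → Q} {sig : Q → Al → Prop} {s : Q} {u v : List Al} :
    Safe step sig s (u ++ v) ↔ Safe step sig s u ∧ Safe step sig (u.foldl step s) v := by
  induction u generalizing s with
  | nil => simp [Safe]
  | cons l u ih => simp [Safe, ih, and_assoc]

/-- A total deterministic automaton whose loops classify the corresponding periodic words
according to the complement of `LMain`. -/
structure LoopAutomaton (Q : Type*) where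
  step : Q → Al → Q
  sig : Q → Al → Prop
  reject : ∀ s u, u.foldl step s = s → HasPattern u → Al.y ∈ u → ¬ Safe step sig s u
  accept : ∀ s u, u.foldl step s = s →
    ((∀ n, ¬ HasPattern (List.replicate n u).flatten) ∨ Al.y ∉ u) → Safe step sig s u

namespace LoopAutomaton

variable {Q : Type*} (M : LoopAutomaton Q)

/-- A safe loop at `s`. -/
def SafeLoop (s : Q) (u : List Al) : Prop :=
  u.foldl M.step s = s ∧ Safe M.step M.sig s u

variable {M}

lemma SafeLoop.append {s : Q} {u v : List Al} (hu : M.SafeLoop s u) (hv : M.SafeLoop s v) :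
    M.SafeLoop s (u ++ v) :=
  ⟨by rw [List.foldl_append, hu.1, hv.1], safe_append.2 ⟨hu.2, by rw [hu.1]; exact hv.2⟩⟩

lemma SafeLoop.false {s : Q} {u : List Al} (hu : M.SafeLoop s u) (hp : HasPattern u)
    (hy : Al.y ∈ u) : False :=
  M.reject s u hu.1 hp hy hu.2

lemma safeLoop_of_core {s : Q} {u : List Al} {d : Core} (hs : u.foldl M.step s = s)
    (hd : u.foldlM coreStep d = some d) : M.SafeLoop s u := by
  refine ⟨hs, M.accept s u hs (.inl fun n hn => ?_)⟩
  have : (List.replicate n u).flatten.foldlM coreStep d = some d := by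
    clear hn
    induction n with
    | zero => rfl
    | succ n ih =>
      rw [List.replicate_succ, List.flatten_cons, List.foldlM_append, hd]
      exact ih
  rw [coreRun_eq_none_of_hasPattern hn] at this
  cases this

lemma safeLoop_of_inner {s : Q} {u : List Al} {i : Inner} (hs : u.foldl M.step s = s)
    (hi : u.foldlM innerStep i = some i) : M.SafeLoop s u :=
  safeLoop_of_core hs (coreRun_eq_of_innerRun 0 false hi)

lemma safeLoop_of_notMem {s : Q} {u : List Al} (hs : u.foldl M.step s = s) (hy : Al.y ∉ u) :
    M.SafeLoop s u :=
  ⟨hs, M.accept s u hs (.inr hy)⟩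

/-! #### The core component -/

variable (M)

/-- A set of pairs in which each automaton state simulates a core state exactly, strongly connected
without the letter `y`. -/
structure CoreComponent where
  carrier : Set (Q × Core)
  closed : ∀ s d, (s, d) ∈ carrier → ∀ (u : List Al) d', Al.y ∉ u → u.foldlM coreStep d = some d' →
    (u.foldl M.step s, d') ∈ carrier
  connected : ∀ s d s' d', (s, d) ∈ carrier → (s', d') ∈ carrier →
    ∃ u : List Al, Al.y ∉ u ∧ u.foldl M.step s = s' ∧ u.foldlM coreStep d = some d'
  surj : ∀ d, ∃ s, (s, d) ∈ carrier
  returns : ∀ s d, (s, d) ∈ carrier → ∀ u : List Al,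
    u.foldlM coreStep d ≠ none → ∃ v : List Al,
    (u ++ v).foldl M.step s = s ∧ (u ++ v).foldlM coreStep d = some d

lemma exists_coreComponent [Finite Q] [Nonempty Q] : Nonempty M.CoreComponent := by
  obtain ⟨q⟩ := ‹Nonempty Q›
  obtain ⟨b, -, hb⟩ := Reach.exists_bottom (step := M.step) (f := coreStep) (T := fun _ => True)
    (q, ((0, false, .p) : Core))
  obtain ⟨b', hbb', hb'⟩ :=
    Reach.exists_bottom (step := M.step) (f := coreStep) (T := fun l => l ≠ .y) b
  have noY : ∀ {u : List Al}, Al.y ∉ u ↔ ∀ l ∈ u, l ≠ Al.y := fun {u} =>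
    ⟨fun h l hl e => h (e ▸ hl), fun h hy => h _ hy rfl⟩
  refine ⟨⟨{x | Reach M.step coreStep (fun l => l ≠ .y) b' x}, ?_, ?_, ?_, ?_⟩⟩
  · intro s d h u d' hu hd
    exact Reach.trans h ⟨u, noY.1 hu, rfl, hd⟩
  · intro s d s' d' h h'
    obtain ⟨u, hu, h₁, h₂⟩ := (hb' _ h).trans h'
    exact ⟨u, noY.2 hu, h₁, h₂⟩
  · intro d
    exact ⟨_, coreWord d, noY.1 (y_notMem_coreWord d), rfl, coreRun_coreWord _ d⟩
  · intro s d h u hu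
    obtain ⟨d', hd'⟩ := Option.ne_none_iff_exists'.1 hu
    have hx : Reach M.step coreStep (fun _ => True) b (s, d) :=
      (hbb'.trans h).mono fun _ _ => trivial
    obtain ⟨v, -, h₁, h₂⟩ :=
      (hb _ (hx.trans (x'' := (u.foldl M.step s, d')) ⟨u, by simp, rfl, hd'⟩)).trans hx
    refine ⟨v, by rw [List.foldl_append]; exact h₁, ?_⟩
    rw [List.foldlM_append, hd']
    exact h₂

variable {M}

namespace CoreComponent

variable (B : M.CoreComponent)

lemma survives {s : Q} {d : Core} (h : (s, d) ∈ B.carrier) {u : List Al} (hu : M.SafeLoop s u) :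
    u.foldlM coreStep d ≠ none := by
  intro hd
  obtain ⟨v, hv, hvd⟩ := B.returns s d h [.y, .res 0] (by
    obtain ⟨α, fresh, i⟩ := d
    cases i <;> simp [coreStep, clStep, innerOf, Inner.toCSt])
  have hl := (safeLoop_of_core hv hvd).append hu
  refine hl.false ?_ (by simp)
  have hv' : v.foldlM coreStep (0, false, .p) = some d := by
    rw [List.foldlM_append] at hvd
    obtain ⟨e, he, hvd⟩ := Option.bind_eq_some_iff.1 hvd
    have : e = (0, false, .p) := by
      obtain ⟨e', -, he⟩ := Option.bind_eq_some_iff.1 he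
      simpa [coreStep, eq_comm] using he
    rwa [this] at hvd
  have : HasPattern (.res 0 :: (v ++ u)) := hasPattern_of_coreRun_eq_none (by
    rw [List.foldlM_append, hv']
    exact hd)
  exact this.of_infix ⟨[.y], [], by simp⟩

lemma eq_of_mem {s : Q} {d d' : Core} (h : (s, d) ∈ B.carrier) (h' : (s, d') ∈ B.carrier) :
    d = d' := by
  have key : ∀ {d d'}, (s, d) ∈ B.carrier → (s, d') ∈ B.carrier → ∀ u : List Al,
      (u.foldlM coreStep d).isSome = true → (u.foldlM coreStep d').isSome = true := by
    intro d d' h h' u hu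
    obtain ⟨v, hv, hvd⟩ := B.returns s d h u (Option.isSome_iff_ne_none.1 hu)
    have := B.survives h' (safeLoop_of_core hv hvd)
    rw [Option.isSome_iff_ne_none]
    intro hn
    rw [List.foldlM_append, hn] at this
    exact this rfl
  by_contra hne
  obtain ⟨u, -, hu⟩ := exists_testWord d d' hne
  have hiff := Bool.eq_iff_iff.2 ⟨key h h' u, key h' h u⟩
  exact hu hiff

/-- The states from which the component cannot be reached without the letter `y`. -/
def waiting : Set Q :=
  {x | ∀ u : List Al, Al.y ∉ u → ∀ d, (u.foldl M.step x, d) ∉ B.carrier}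

lemma mem_waiting {s : Q} {d : Core} (h : (s, d) ∈ B.carrier) {v : List Al} (hy : Al.y ∉ v)
    (hv : v.foldlM coreStep d = none) : v.foldl M.step s ∈ B.waiting := by
  intro u hu d' h'
  obtain ⟨z, hz, hzs, -⟩ := B.connected _ _ _ _ h' h
  refine B.survives h (u := v ++ u ++ z) (safeLoop_of_notMem ?_ ?_) ?_
  · simpa [List.foldl_append] using hzs
  · simp [hy, hu, hz]
  · rw [List.append_assoc, List.foldlM_append, hv]
    rfl

lemma waiting_nonempty : B.waiting.Nonempty := by
  obtain ⟨s, hs⟩ := B.surj (0, false, .p)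
  exact ⟨_, B.mem_waiting hs y_notMem_killWord (coreRun_killWord _)⟩

/-- For each label `β` there is a waiting state from which words that lead back to the label `β`
can enter the component only with the label `β`. -/
lemma exists_waiting [Finite Q] (β : Fin 6) : ∃ x ∈ B.waiting, ∀ u : List Al,
    u.foldlM coreStep (β, false, .p) = some (β, false, .p) → ∀ α fresh i,
      (u.foldl M.step x, (α, fresh, i)) ∈ B.carrier → (α, fresh) = (β, false) := by
  by_contra! hcon
  have hex : ∀ x, ∃ u : List Al, x ∈ B.waiting →
      u.foldlM coreStep (β, false, .p) = some (β, false, .p) ∧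
      ∃ α fresh, (u.foldl M.step x, (α, fresh, .p)) ∈ B.carrier ∧ (α, fresh) ≠ (β, false) := by
    intro x
    by_cases hx : x ∈ B.waiting
    · obtain ⟨u, hu, α, fresh, i, hmem, hne⟩ := hcon x hx
      refine ⟨u ++ [.b, .num 0], fun _ => ⟨?_, α, fresh, ?_, hne⟩⟩
      · rw [List.foldlM_append, hu]
        exact coreRun_eq_of_innerRun _ _ (innerRun_sync _)
      · rw [List.foldl_append]
        exact B.closed _ _ hmem _ _ (by simp) (coreRun_eq_of_innerRun _ _ (innerRun_sync _))
    · exact ⟨[], fun h => absurd h hx⟩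
  choose u hu using hex
  set v := labelWord β ++ labelWord β with hv
  have hvy : Al.y ∉ v := by simp [hv, y_notMem_labelWord]
  obtain ⟨x, hx, z, hz, hloop⟩ := exists_return M.step B.waiting B.waiting_nonempty
    (fun w => w.foldlM coreStep (β, false, .p) = some (β, false, .p)) rfl
    (fun w w' hw hw' => by rw [List.foldlM_append, hw]; exact hw')
    (fun x => u x ++ v)
    (fun x hx => by
      rw [List.foldlM_append, (hu x hx).1]
      exact coreRun_labelWord_twice_self β)
    (fun x hx => by
      obtain ⟨-, α, fresh, hmem, hne⟩ := hu x hx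
      rw [List.foldl_append]
      exact B.mem_waiting hmem hvy (coreRun_labelWord_twice α fresh β hne))
  obtain ⟨hux, α, fresh, hmem, hne⟩ := hu x hx
  refine B.survives hmem (u := v ++ z ++ u x) (safeLoop_of_core (d := (β, false, .p)) ?_ ?_) ?_
  · simp only [List.foldl_append] at hloop ⊢
    rw [hloop]
  · rw [List.foldlM_append, List.foldlM_append, coreRun_labelWord_twice_self β]
    change (z.foldlM coreStep _).bind _ = _
    rw [hz]
    exact hux
  · rw [List.append_assoc, List.foldlM_append, coreRun_labelWord_twice α fresh β hne]
    rfl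

end CoreComponent

/-! #### States ignorant of the last label -/

/-- If no word without label leads from `(x, p)` into `C`, there are six states outside `C`. -/
lemma exists_six_of_inner [Finite Q] {x : Q} {C : Set Q}
    (hx : ∀ (u : List Al) i, u.foldlM innerStep .p = some i → u.foldl M.step x ∉ C)
    (hC : ∀ s ∈ C, ∀ u : List Al, M.SafeLoop s u → ¬ killWord <+: u) :
    ∃ g : Option Inner → Q, Function.Injective g ∧ ∀ o, g o ∉ C := by
  obtain ⟨b, hxb, hb⟩ := Reach.exists_bottom (step := M.step) (f := innerStep)
    (T := fun _ => True) (x, Inner.p)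
  obtain ⟨w, -, hw⟩ := exists_bottom
    (R := fun s t : Q => ∃ u : List Al, Al.y ∉ u ∧ u.foldl M.step s = t)
    (fun s => ⟨[], by simp, rfl⟩)
    (by
      rintro s t r ⟨u, hu, rfl⟩ ⟨v, hv, rfl⟩
      exact ⟨u ++ v, by simp [hu, hv], by simp⟩) x
  obtain ⟨k, hk, hwk⟩ := hw _ ⟨killWord, y_notMem_killWord, rfl⟩
  have hwloop : M.SafeLoop w (killWord ++ k) :=
    safeLoop_of_notMem (by simpa using hwk) (by simp [y_notMem_killWord, hk])
  set Y : Set (Q × Inner) := {z | Reach M.step innerStep (fun _ => True) b z} with hY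
  have conn : ∀ {z z'}, z ∈ Y → z' ∈ Y → ∃ u : List Al, u.foldl M.step z.1 = z'.1 ∧
      u.foldlM innerStep z.2 = some z'.2 := by
    intro z z' hz hz'
    obtain ⟨u, -, hu⟩ := (hb z hz).trans hz'
    exact ⟨u, hu⟩
  have closed : ∀ {s i}, (s, i) ∈ Y → ∀ (u : List Al) j, u.foldlM innerStep i = some j →
      (u.foldl M.step s, j) ∈ Y :=
    fun h u j hu => Reach.trans h ⟨u, by simp, rfl, hu⟩
  have yloop : ∀ {s i}, (s, i) ∈ Y → ∃ u : List Al, Al.y ∈ u ∧ M.SafeLoop s u := by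
    intro s i h
    have hi := innerRun_y_innerWord i i
    obtain ⟨v, hv, hvi⟩ := conn (closed h _ _ hi) h
    refine ⟨Al.y :: innerWord i ++ v, by simp, safeLoop_of_inner (i := i) (by simpa using hv) ?_⟩
    rw [List.foldlM_append, hi]
    exact hvi
  have separated : ∀ {s i j}, (s, i) ∈ Y → (s, j) ∈ Y → ∀ g₀ g₁ : Fin 6, g₀ ≠ g₁ → ∀ v : List Al,
      ¬ ∀ γ ∈ [g₀, g₁], (v ++ [Al.num γ]).foldlM innerStep i = some .p ∧
        clRun j.toCSt (v ++ [Al.num γ]) = some (.ell γ) := by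
    intro s i j hi hj g₀ g₁ hg v h
    have loop : ∀ γ ∈ [g₀, g₁], ∃ n : List Al, M.SafeLoop s (v ++ [Al.num γ] ++ n) ∧
        n.foldlM innerStep .p = some j := by
      intro γ hγ
      obtain ⟨n, hn, hnj⟩ := conn (closed hi _ _ (h γ hγ).1) hj
      obtain ⟨k, hk, hki⟩ := conn hj hi
      refine ⟨n, ⟨by simpa using hn, ?_⟩, hnj⟩
      refine (safe_append.1 (safeLoop_of_inner (i := i) (u := v ++ [Al.num γ] ++ n ++ k)
        ?_ ?_).2).1
      · rw [List.foldl_append, List.foldl_append, hn, hk]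
      · rw [List.foldlM_append, List.foldlM_append, (h γ hγ).1]
        change (n.foldlM innerStep _).bind _ = _
        rw [hnj]
        exact hki
    obtain ⟨n₀, hl₀, hn₀⟩ := loop g₀ (by simp)
    obtain ⟨n₁, hl₁, hn₁⟩ := loop g₁ (by simp)
    obtain ⟨z, hzy, hz⟩ := yloop hi
    have mem : ∀ (n : List Al) γ, n.foldlM innerStep .p = some j → γ ∈ [g₀, g₁] →
        n ++ (v ++ [Al.num γ]) ∈ Lcl γ := by
      intro n γ hn hγ
      change clRun Inner.p.toCSt _ = _
      rw [clRun_append, clRun_eq_of_innerRun hn]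
      exact (h γ hγ).2
    refine ((((hl₀.append hl₀).append hl₁).append hl₁).append hz).false
      ⟨g₀, g₁, hg, v ++ [Al.num g₀], n₀ ++ (v ++ [Al.num g₀]), n₀ ++ (v ++ [Al.num g₁]),
        n₁ ++ (v ++ [Al.num g₁]), n₁ ++ z, .inl (mem _ _ hn₀ (by simp)), mem _ _ hn₀ (by simp),
        mem _ _ hn₁ (by simp), by simp⟩ (by simp [hzy])
  have hex : ∀ i, ∃ s, (s, i) ∈ Y := fun i =>
    ⟨_, closed (Reach.refl b) _ _ (innerRun_y_innerWord _ i)⟩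
  choose g hg using hex
  have hinj : Function.Injective g := by
    intro i j hij
    by_contra hne
    have hj : (g i, j) ∈ Y := hij ▸ hg j
    obtain ⟨v, -, γ, hγ, h⟩ := exists_innerTest i j hne
    have hγ' : γ.1 ≠ γ.2 := by
      clear h
      revert γ
      decide
    rcases h with h | h
    · exact separated (hg i) hj _ _ hγ' v h
    · exact separated hj (hg i) _ _ hγ' v h
  refine ⟨fun o => o.elim w g, ?_, ?_⟩
  · have hne : ∀ i, g i ≠ w := by
      intro i hi
      obtain ⟨z, hzy, hz⟩ := yloop (hg i)
      rw [hi] at hz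
      exact (hwloop.append hz).false (hasPattern_killWord.of_infix ⟨[], k ++ z, by simp⟩)
        (by simp [hzy])
    rintro (_ | i) (_ | j) h
    · rfl
    · exact absurd h.symm (hne j)
    · exact absurd h (hne i)
    · exact congrArg some (hinj h)
  · rintro (_ | i) hmem
    · exact hC w hmem _ hwloop ⟨k, rfl⟩
    · obtain ⟨u, -, hu, hui⟩ := hxb.trans (hg i)
      exact hx u i hui (by rw [hu]; exact hmem)

theorem card_ge [Fintype Q] [Nonempty Q] (M : LoopAutomaton Q) : 66 ≤ Fintype.card Q := by
  obtain ⟨B⟩ := M.exists_coreComponent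
  choose f hf using B.surj
  have hfinj : Function.Injective f := fun d d' h => B.eq_of_mem (hf d) (h ▸ hf d')
  set C : Set Q := {s | ∃ d, (s, d) ∈ B.carrier} with hC
  have count : ∀ {I : Type} [Fintype I], Fintype.card I = 6 → ∀ g : I → Q, Function.Injective g →
      (∀ o, g o ∉ C) → 66 ≤ Fintype.card Q := by
    intro I _ hI g hg hgC
    have := Fintype.card_le_of_injective _
      (hfinj.sumElim hg fun d o h => hgC o ⟨d, h ▸ hf d⟩)
    rw [Fintype.card_sum, hI] at this
    exact this
  choose x hxw hx using B.exists_waiting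
  by_cases hinj : Function.Injective x
  · exact count (by simp) x hinj fun β ⟨d, hd⟩ => hxw β [] (by simp) d hd
  · obtain ⟨β, β', hββ', hne⟩ : ∃ β β', x β = x β' ∧ β ≠ β' := by
      simpa [Function.Injective] using hinj
    obtain ⟨g, hg, hgC⟩ := exists_six_of_inner (M := M) (x := x β) (C := C)
      (by
        rintro u i hu ⟨⟨α, fresh, j⟩, hd⟩
        have hsync : (u ++ [Al.b, .num 0]).foldlM innerStep .p = some .p := by
          rw [List.foldlM_append, hu]
          exact innerRun_sync i
        have hmem : ((u ++ [Al.b, .num 0]).foldl M.step (x β), (α, fresh, .p)) ∈ B.carrier := by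
          rw [List.foldl_append]
          exact B.closed _ _ hd _ _ (by simp) (coreRun_eq_of_innerRun _ _ (innerRun_sync _))
        have h₁ := hx β _ (coreRun_eq_of_innerRun _ _ hsync) _ _ _ hmem
        have h₂ := hx β' _ (coreRun_eq_of_innerRun _ _ hsync) _ _ _ (hββ' ▸ hmem)
        exact hne (Prod.ext_iff.1 (h₁.symm.trans h₂)).1)
      (by
        rintro s ⟨d, hd⟩ _ hu ⟨k, rfl⟩
        refine B.survives hd hu ?_
        rw [List.foldlM_append, coreRun_killWord]
        rfl)
    exact count (by decide) g hg hgC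

end LoopAutomaton

/-! ### Ultimately periodic words -/

/-- The infinite word `u w`. -/
def prepend (u : List Al) (w : ℕ → Al) (i : ℕ) : Al :=
  if h : i < u.length then u[i] else w (i - u.length)

/-- The infinite word `ℓ ℓ ℓ ⋯`. -/
def cyc (ℓ : List Al) (i : ℕ) : Al :=
  ℓ.getD (i % ℓ.length) .y

lemma prepend_add (u : List Al) (w : ℕ → Al) (i : ℕ) : prepend u w (u.length + i) = w i := by
  simp [prepend]

lemma cyc_mul_add (ℓ : List Al) (k i : ℕ) : cyc ℓ (k * ℓ.length + i) = cyc ℓ i := by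
  simp [cyc]

lemma wordSegment_append (w : ℕ → Al) {l m n : ℕ} (hlm : l ≤ m) (hmn : m ≤ n) :
    wordSegment w l m ++ wordSegment w m n = wordSegment w l n := by
  obtain ⟨a, rfl⟩ := Nat.exists_eq_add_of_le hlm
  obtain ⟨b, rfl⟩ := Nat.exists_eq_add_of_le hmn
  rw [wordSegment, wordSegment, wordSegment, Nat.add_sub_cancel_left, Nat.add_sub_cancel_left,
    add_assoc, Nat.add_sub_cancel_left, List.range_add]
  simp [Function.comp_def, add_assoc]

lemma wordSegment_prepend (u : List Al) (w : ℕ → Al) :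
    wordSegment (prepend u w) 0 u.length = u :=
  List.ext_getElem (by simp [wordSegment]) fun i _ hi => by simp [wordSegment, prepend, hi]

lemma wordSegment_prepend_add (u : List Al) (w : ℕ → Al) (m n : ℕ) :
    wordSegment (prepend u w) (u.length + m) (u.length + n) = wordSegment w m n := by
  simp [wordSegment, add_assoc, prepend_add, Nat.add_sub_add_left]

lemma wordSegment_cyc (ℓ : List Al) (k : ℕ) :
    wordSegment (cyc ℓ) (k * ℓ.length) ((k + 1) * ℓ.length) = ℓ :=
  List.ext_getElem (by simp [wordSegment, add_mul]) fun i _ hi => by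
    simp only [wordSegment, List.getElem_map, List.getElem_range, cyc_mul_add]
    simp [cyc, Nat.mod_eq_of_lt hi, hi]

lemma wordSegment_cyc_zero (ℓ : List Al) (n : ℕ) :
    wordSegment (cyc ℓ) 0 (n * ℓ.length) = (List.replicate n ℓ).flatten := by
  induction n with
  | zero => simp [wordSegment]
  | succ n ih =>
    rw [← wordSegment_append _ (Nat.zero_le (n * ℓ.length)) (Nat.mul_le_mul_right _ n.le_succ), ih,
      wordSegment_cyc, List.replicate_succ', List.flatten_append]
    simp

lemma prepend_cyc_mem_omegaPow {X : Set (List Al)} {u ℓ : List Al} (hu : u ∈ X) (hℓ : ℓ ∈ X)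
    (hu₀ : u ≠ []) (hℓ₀ : ℓ ≠ []) : prepend u (cyc ℓ) ∈ omegaPow X := by
  refine ⟨fun k => k.casesOn 0 fun k => u.length + k * ℓ.length, rfl,
    strictMono_nat_of_lt_succ ?_, ?_⟩
  · rintro (_ | k)
    · simpa using List.length_pos_iff.2 hu₀
    · simpa [add_mul] using List.length_pos_iff.2 hℓ₀
  · rintro (_ | k)
    · simpa [wordSegment_prepend] using hu
    · simpa [wordSegment_prepend_add, wordSegment_cyc] using hℓ

lemma exists_infix_of_prepend_cyc_mem_omegaPow {X : Set (List Al)} {u ℓ : List Al} (hℓ₀ : ℓ ≠ [])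
    (h : prepend u (cyc ℓ) ∈ omegaPow X) :
    ∃ n, ∃ v ∈ X, v <:+: (List.replicate n ℓ).flatten := by
  obtain ⟨φ, -, hφ, hX⟩ := h
  obtain ⟨m, hm⟩ := Nat.exists_eq_add_of_le (hφ.le_apply (x := u.length))
  obtain ⟨n, hn⟩ := Nat.exists_eq_add_of_le
    ((hφ.le_apply (x := u.length)).trans (hφ (Nat.lt_succ_self _)).le)
  have hmn : m ≤ n := by
    have := hφ (Nat.lt_succ_self u.length)
    omega
  have hv := hX u.length
  rw [hm, hn, wordSegment_prepend_add] at hv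
  have hnl : n ≤ n * ℓ.length := Nat.le_mul_of_pos_right _ (List.length_pos_iff.2 hℓ₀)
  refine ⟨n, _, hv, wordSegment (cyc ℓ) 0 m, wordSegment (cyc ℓ) n (n * ℓ.length), ?_⟩
  rw [← wordSegment_cyc_zero, wordSegment_append _ (Nat.zero_le _) hmn,
    wordSegment_append _ (Nat.zero_le _) hnl]

lemma exists_y_of_mem_LMain {w : ℕ → Al} (hw : w ∈ LMain) (n : ℕ) : ∃ i, n ≤ i ∧ w i = .y := by
  obtain ⟨φ, -, hφ, hX⟩ := hw
  obtain ⟨v, -, hv⟩ := mem_blocks_iff.1 (hX n)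
  have hy : Al.y ∈ wordSegment w (φ n) (φ (n + 1)) := by simp [hv]
  obtain ⟨i, -, hi⟩ := List.mem_map.1 hy
  exact ⟨_, hφ.le_apply.trans (Nat.le_add_right _ _), hi⟩

/-! ### Runs of total deterministic automata -/

section Run

variable {Q : Type*} (step : Q → Al → Q) (sig : Q → Al → Prop)

/-- The state reached from `s` after the first `n` letters of `w`. -/
def stateAt (s : Q) (w : ℕ → Al) (n : ℕ) : Q :=
  (wordSegment w 0 n).foldl step s

/-- The run from `s` on `w` takes infinitely many significant transitions. -/
def InfSig (s : Q) (w : ℕ → Al) : Prop :=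
  ∀ n, ∃ i, n ≤ i ∧ sig (stateAt step s w i) (w i)

variable {step sig}

lemma wordSegment_succ (w : ℕ → Al) (n : ℕ) :
    wordSegment w 0 (n + 1) = wordSegment w 0 n ++ [w n] := by
  simp [wordSegment, List.range_succ]

lemma stateAt_succ (s : Q) (w : ℕ → Al) (n : ℕ) :
    stateAt step s w (n + 1) = step (stateAt step s w n) (w n) := by
  simp [stateAt, wordSegment_succ]

lemma stateAt_prepend_add (s : Q) (u : List Al) (w : ℕ → Al) (n : ℕ) :
    stateAt step s (prepend u w) (u.length + n) = stateAt step (u.foldl step s) w n := by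
  rw [stateAt, ← wordSegment_append _ (Nat.zero_le u.length) (Nat.le_add_right _ _),
    List.foldl_append, wordSegment_prepend]
  exact congrArg _ (wordSegment_prepend_add u w 0 n)

lemma infSig_prepend {s : Q} {u : List Al} {w : ℕ → Al} :
    InfSig step sig s (prepend u w) ↔ InfSig step sig (u.foldl step s) w := by
  constructor
  · intro h n
    obtain ⟨i, hi, hs⟩ := h (u.length + n)
    obtain ⟨j, rfl⟩ := Nat.exists_eq_add_of_le ((Nat.le_add_right _ _).trans hi)
    rw [stateAt_prepend_add, prepend_add] at hs
    exact ⟨j, by omega, hs⟩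
  · intro h n
    obtain ⟨i, hi, hs⟩ := h n
    exact ⟨u.length + i, by omega, by rwa [stateAt_prepend_add, prepend_add]⟩

lemma safe_wordSegment_iff {s : Q} {w : ℕ → Al} {n : ℕ} :
    Safe step sig s (wordSegment w 0 n) ↔ ∀ i < n, ¬ sig (stateAt step s w i) (w i) := by
  induction n with
  | zero => simp [wordSegment, Safe]
  | succ n ih =>
    rw [wordSegment_succ, safe_append, ih]
    rw [Nat.forall_lt_succ_right]
    simp [Safe, stateAt]

lemma infSig_cyc {s : Q} {ℓ : List Al} (hℓ₀ : ℓ ≠ []) (hℓ : ℓ.foldl step s = s) :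
    InfSig step sig s (cyc ℓ) ↔ ¬ Safe step sig s ℓ := by
  have hpos := List.length_pos_iff.2 hℓ₀
  have hpow : ∀ k, (List.replicate k ℓ).flatten.foldl step s = s := by
    intro k
    induction k with
    | zero => rfl
    | succ k ih => rw [List.replicate_succ, List.flatten_cons, List.foldl_append, hℓ, ih]
  have hper : ∀ k i, stateAt step s (cyc ℓ) (k * ℓ.length + i) = stateAt step s (cyc ℓ) i := by
    intro k i
    rw [stateAt, ← wordSegment_append _ (Nat.zero_le (k * ℓ.length)) (Nat.le_add_right _ _),
      List.foldl_append, wordSegment_cyc_zero, hpow]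
    simp [wordSegment, stateAt, cyc_mul_add]
  have hsafe := safe_wordSegment_iff (step := step) (sig := sig) (s := s) (w := cyc ℓ)
    (n := ℓ.length)
  have hseg := wordSegment_cyc ℓ 0
  simp only [zero_mul, zero_add, one_mul] at hseg
  rw [hseg] at hsafe
  rw [hsafe]
  push Not
  constructor
  · intro h
    obtain ⟨i, -, hi⟩ := h 0
    rw [← Nat.div_add_mod' i ℓ.length, hper, cyc_mul_add] at hi
    exact ⟨_, Nat.mod_lt _ hpos, hi⟩
  · rintro ⟨i, -, hi⟩ n
    refine ⟨n * ℓ.length + i, ?_, by rwa [hper, cyc_mul_add]⟩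
    exact (Nat.le_mul_of_pos_right _ hpos).trans (Nat.le_add_right _ _)

/-- A total deterministic automaton for `LMain` all of whose states are reachable. -/
def LoopAutomaton.ofLMain (init : Q) (hreach : ∀ s, ∃ u : List Al, u.foldl step init = s)
    (hlang : ∀ w, w ∈ LMain ↔ InfSig step sig init w) : LoopAutomaton Q where
  step := step
  sig := sig
  reject := by
    intro s ℓ hℓ hp hy hsafe
    obtain ⟨u, rfl⟩ := hreach s
    obtain ⟨u₁, u₂, rfl⟩ := List.append_of_mem hy
    set s := u.foldl step init with hs
    set s' := (u₁ ++ [Al.y]).foldl step s with hs'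
    have hback : u₂.foldl step s' = s := by
      rw [hs', ← List.foldl_append, List.append_assoc]
      exact hℓ
    have hblock : ∀ v, v ++ (u₁ ++ Al.y :: u₂) ++ u₁ ++ [Al.y] ∈ blocks := fun v =>
      mem_blocks_iff.2 ⟨_, hp.of_infix ⟨v, u₁, rfl⟩, rfl⟩
    have hmem : prepend _ (cyc _) ∈ LMain :=
      prepend_cyc_mem_omegaPow (hblock u) (hblock u₂) (by simp) (by simp)
    have hfold : ∀ v t, v.foldl step t = s →
        (v ++ (u₁ ++ Al.y :: u₂) ++ u₁ ++ [Al.y]).foldl step t = s' := by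
      intro v t hv
      rw [List.append_assoc _ u₁, List.foldl_append, List.foldl_append (l := v), hv, hℓ]
    rw [hlang, infSig_prepend, hfold u init rfl, infSig_cyc (by simp) (hfold u₂ s' hback)] at hmem
    refine hmem ?_
    have hsafe' := hsafe
    rw [List.append_cons, safe_append, ← hs'] at hsafe'
    rw [List.append_assoc _ u₁, safe_append, safe_append, List.foldl_append, hback, hℓ]
    exact ⟨⟨hsafe'.2, hsafe⟩, hsafe'.1⟩
  accept := by
    intro s ℓ hℓ h
    obtain ⟨u, rfl⟩ := hreach s
    rcases eq_or_ne ℓ [] with rfl | hℓ₀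
    · trivial
    by_contra hsafe
    have hmem := (hlang (prepend u (cyc ℓ))).2 (infSig_prepend.2 ((infSig_cyc hℓ₀ hℓ).2 hsafe))
    obtain ⟨n, v, hv, hvn⟩ := exists_infix_of_prepend_cyc_mem_omegaPow hℓ₀ hmem
    obtain ⟨v', hp, rfl⟩ := mem_blocks_iff.1 hv
    rcases h with h | h
    · exact h n (hp.of_infix (List.IsInfix.trans ⟨[], [.y], rfl⟩ hvn))
    · have hy : Al.y ∈ (List.replicate n ℓ).flatten := hvn.subset (by simp)
      obtain ⟨ℓ', hℓ', hy⟩ := List.mem_flatten.1 hy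
      rw [List.eq_of_mem_replicate hℓ'] at hy
      exact h hy

end Run

/-! ### The automaton of the theorem -/

section Automaton

variable {Q : Type} (A : BuchiAutomaton Al Q)

open Classical in
/-- The transition function of `A`, completed by self-loops. -/
noncomputable def nextState (s : Q) (l : Al) : Q :=
  if h : ∃ t, (s, l, t) ∈ A.trans then h.choose else s

variable {A}

lemma nextState_eq (hdet : A.Deterministic) {s t : Q} {l : Al} (h : (s, l, t) ∈ A.trans) :
    nextState A s l = t := by
  have hex : ∃ t, (s, l, t) ∈ A.trans := ⟨t, h⟩
  rw [nextState, dif_pos hex]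
  exact hdet _ _ _ _ hex.choose_spec h

lemma run_eq_stateAt (hdet : A.Deterministic) {w : ℕ → Al} {ρ : ℕ → Q}
    (hρ : A.IsRunFrom A.init w ρ) (n : ℕ) : ρ n = stateAt (nextState A) A.init w n := by
  induction n with
  | zero => exact hρ.1
  | succ n ih => rw [stateAt_succ, ← ih, nextState_eq hdet (hρ.2 n)]

/-- No run of `A` gets stuck, because every finite word extends to one outside `LMain`. -/
lemma nextState_mem_trans (hdet : A.Deterministic) (hlang : A.CoLang = LMainᶜ)
    (u : List Al) (l : Al) :
    (u.foldl (nextState A) A.init, l, nextState A (u.foldl (nextState A) A.init) l) ∈ A.trans := by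
  have hw : prepend u (fun n => n.casesOn l fun _ => .b) ∈ A.CoLang := by
    rw [hlang]
    intro hmem
    obtain ⟨i, hi, hy⟩ := exists_y_of_mem_LMain hmem (u.length + 1)
    obtain ⟨j, rfl⟩ := Nat.exists_eq_add_of_le hi
    rw [add_assoc, prepend_add, add_comm] at hy
    cases hy
  obtain ⟨ρ, hρ, -⟩ := hw
  have hu := stateAt_prepend_add (step := nextState A) A.init u (fun n => n.casesOn l fun _ => .b) 0
  have hl := prepend_add u (fun n => n.casesOn l fun _ => .b) 0
  have h := hρ.2 u.length
  rw [run_eq_stateAt hdet hρ, run_eq_stateAt hdet hρ, stateAt_succ] at h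
  rw [add_zero] at hu hl
  rw [hu, hl] at h
  exact h

lemma mem_LMain_iff (hdet : A.Deterministic) (hlang : A.CoLang = LMainᶜ) (w : ℕ → Al) :
    w ∈ LMain ↔ InfSig (nextState A) (fun s l => (s, l, nextState A s l) ∈ A.sig) A.init w := by
  rw [← not_iff_not, ← Set.mem_compl_iff, ← hlang]
  simp only [InfSig, ← stateAt_succ]
  push Not
  constructor
  · rintro ⟨ρ, hρ, hacc⟩
    rwa [show ρ = _ from funext (run_eq_stateAt hdet hρ)] at hacc
  · intro h
    refine ⟨_, ⟨rfl, fun n => ?_⟩, h⟩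
    rw [stateAt_succ]
    exact nextState_mem_trans hdet hlang _ _

/-- The reachable states of `A` form an automaton classifying loops. -/
lemma nonempty_loopAutomaton (hdet : A.Deterministic) (hlang : A.CoLang = LMainᶜ) :
    Nonempty (LoopAutomaton {s // ∃ u : List Al, u.foldl (nextState A) A.init = s}) := by
  set R := {s // ∃ u : List Al, u.foldl (nextState A) A.init = s}
  let step : R → Al → R := fun s l => ⟨nextState A s l, by
    obtain ⟨_, u, rfl⟩ := s
    exact ⟨u ++ [l], by simp⟩⟩
  let init : R := ⟨A.init, [], rfl⟩
  have hval : ∀ (u : List Al) (s : R), (u.foldl step s : R).1 = u.foldl (nextState A) s.1 := by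
    intro u
    induction u with
    | nil => exact fun _ => rfl
    | cons l u ih => exact fun s => ih _
  refine ⟨.ofLMain (step := step) (sig := fun s l => (s.1, l, nextState A s.1 l) ∈ A.sig)
    init ?_ ?_⟩
  · rintro ⟨_, u, rfl⟩
    exact ⟨u, Subtype.ext (hval u init)⟩
  · intro w
    simp only [mem_LMain_iff hdet hlang w, InfSig, stateAt, hval]
    rfl

end Automaton

theorem card_ge_of_coLang_eq {Q : Type} [Fintype Q] {A : BuchiAutomaton Al Q}
    (hdet : A.Deterministic) (hlang : A.CoLang = LMainᶜ) : 66 ≤ Fintype.card Q := by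
  classical
  obtain ⟨M⟩ := nonempty_loopAutomaton hdet hlang
  have : Nonempty {s // ∃ u : List Al, u.foldl (nextState A) A.init = s} := ⟨A.init, [], rfl⟩
  exact M.card_ge.trans (Fintype.card_subtype_le _)

end LMainBound

/-- Every deterministic coBüchi automaton recognising the
complement of `L_main` has at least 66 states. -/
theorem det_cobuchi_for_compl_LMain_ge_66 {Q : Type} [Fintype Q] (A : BuchiAutomaton Al Q)
    (hdet : A.Deterministic) (hlang : A.CoLang = LMainᶜ) :
    66 ≤ Fintype.card Q := by
  exact LMainBound.card_ge_of_coLang_eq hdet hlang
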